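/- With the apparatus fixed, suppose that a and b are integers with 0 ≤ a < b ≤ (2θ)^{−1} and that Λ ≥ 0. Then there exists a constant C depending at most on s, k, r, t, N such that ⟦K_{a,b}(X)⟧ ≤ C·X^{Λ+δ}·(M^{b−a})^s. -/

import Mathlib

open Filter MeasureTheory Finset

attribute [local instance] Classical.propDecidable

noncomputable section

/-- Number of integral solutions of the Vinogradov system of degree k
in 2s variables from [1,X]. -/
def Jcount (s k : ℕ) (X : ℝ) : ℕ :=
  Set.ncard {xy : (Fin s → ℤ) × (Fin s → ℤ) |
    (∀ i, 1 ≤ xy.1 i ∧ (xy.1 i : ℝ) ≤ X) ∧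
    (∀ i, 1 ≤ xy.2 i ∧ (xy.2 i : ℝ) ≤ X) ∧
    ∀ j ∈ Finset.Icc 1 k, ∑ i, ((xy.1 i) ^ j - (xy.2 i) ^ j) = 0}

/-- e(z) = exp(2πiz). -/
def ec (z : ℝ) : ℂ := Complex.exp (2 * Real.pi * Complex.I * z)

/-- The unit box [0,1)^k. -/
def box (k : ℕ) : Set (Fin k → ℝ) := Set.univ.pi fun _ => Set.Ico (0:ℝ) 1

/-- The exponential sum f_c(α;ξ), over 1 ≤ x ≤ X with x ≡ ξ (mod p^c). -/
def fexp (k p : ℕ) (X : ℝ) (c : ℕ) (ξ : ℤ) (α : Fin k → ℝ) : ℂ :=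
  ∑ x ∈ (Finset.Icc (1:ℤ) ⌊X⌋).filter (fun x => Int.ModEq ((p:ℤ)^c) x ξ),
    ec (∑ j : Fin k, α j * (x:ℝ)^((j:ℕ)+1))

/-- The set Ξ_c^r(ξ): r-tuples in [1,p^{c+1}], congruent to ξ mod p^c,
pairwise distinct mod p^{c+1}. -/
def XiSet (p r c : ℕ) (ξ : ℤ) : Set (Fin r → ℤ) :=
  {v | (∀ i, 1 ≤ v i ∧ v i ≤ (p:ℤ)^(c+1)) ∧
       (∀ i, Int.ModEq ((p:ℤ)^c) (v i) ξ) ∧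
       Function.Injective fun i => ((v i : ZMod (p^(c+1))))}

/-- The conditioned exponential sum F_c(α;ξ). -/
def Fexp (k p r : ℕ) (X : ℝ) (c : ℕ) (ξ : ℤ) (α : Fin k → ℝ) : ℂ :=
  ∑ᶠ v ∈ XiSet p r c ξ, ∏ i, fexp k p X (c+1) (v i) α

/-- The mean value I_{a,b}(X;ξ,η). -/
def Iab (k p r s : ℕ) (X : ℝ) (a b : ℕ) (ξ η : ℤ) : ℝ :=
  ∫ α in box k, ‖Fexp k p r X a ξ α‖^2 * ‖fexp k p X b η α‖^(2*s)

/-- The mean value K_{a,b}(X;ξ,η). -/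
def Kab (k p r t : ℕ) (X : ℝ) (a b : ℕ) (ξ η : ℤ) : ℝ :=
  ∫ α in box k, ‖Fexp k p r X a ξ α‖^2 * ‖Fexp k p r X b η α‖^(2*t)

/-- I_{a,b}(X): the maximum of I_{a,b}(X;ξ,η) over admissible ξ, η. -/
def Imax (k p r s : ℕ) (X : ℝ) (a b : ℕ) : ℝ :=
  sSup {v : ℝ | ∃ ξ η : ℤ, 1 ≤ ξ ∧ ξ ≤ (p:ℤ)^a ∧ 1 ≤ η ∧ η ≤ (p:ℤ)^b ∧
    ¬ Int.ModEq (p:ℤ) η ξ ∧ v = Iab k p r s X a b ξ η}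

/-- The set Ξ(η) of members of Ξ_0^r(0) avoiding the class of η mod p. -/
def XiTilde (p r : ℕ) (η : ℤ) : Set (Fin r → ℤ) :=
  {v | v ∈ XiSet p r 0 0 ∧ ∀ i, ¬ Int.ModEq (p:ℤ) (v i) η}

/-- The pre-conditioned sum F(α;η). -/
def Ftilde (k p r : ℕ) (X : ℝ) (η : ℤ) (α : Fin k → ℝ) : ℂ :=
  ∑ᶠ v ∈ XiTilde p r η, ∏ i, fexp k p X 1 (v i) α

/-- The mean value K̃_c(X;η). -/
def Ktilde (k p r t : ℕ) (X : ℝ) (c : ℕ) (η : ℤ) : ℝ :=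
  ∫ α in box k, ‖Ftilde k p r X η α‖^2 * ‖Fexp k p r X c η α‖^(2*t)

/-- K_{a,b}(X): for a ≥ 1 the maximum of K_{a,b}(X;ξ,η) over admissible ξ, η;
for a = 0 the pre-congruencing quantity K_{0,b}(X) = max_η K̃_b(X;η). -/
def Kmax (k p r t : ℕ) (X : ℝ) (a b : ℕ) : ℝ :=
  if a = 0 then sSup {v : ℝ | ∃ η : ℤ, 1 ≤ η ∧ η ≤ (p:ℤ)^b ∧ v = Ktilde k p r t X b η}
  else sSup {v : ℝ | ∃ ξ η : ℤ, 1 ≤ ξ ∧ ξ ≤ (p:ℤ)^a ∧ 1 ≤ η ∧ η ≤ (p:ℤ)^b ∧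
    ¬ Int.ModEq (p:ℤ) η ξ ∧ v = Kab k p r t X a b ξ η}

/-- λ = limsup_{Y→∞} log J_{sr,k}(Y)/log Y. -/
def lamExp (k sr : ℕ) : ℝ :=
  Filter.limsup (fun Y : ℝ => Real.log ((Jcount sr k Y : ℝ)) / Real.log Y) Filter.atTop

/-- θ = (16t)^{-N-1}. -/
def thetaC (t N : ℕ) : ℝ := (16*(t:ℝ)) ^ (-((N:ℝ)+1))

/-- δ = θ/(1000 N t^N). -/
def deltaC (t N : ℕ) : ℝ := thetaC t N / (1000 * (N:ℝ) * (t:ℝ)^N)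

/-- M = X^θ. -/
def Mval (t N : ℕ) (X : ℝ) : ℝ := X ^ thetaC t N

/-- κ = r(t+1) - (1/2)(t+r-k)(t+r-k-1+(2r-2)/(t-1)). -/
def kappa (k r t : ℕ) : ℝ :=
  (r : ℝ) * ((t : ℝ) + 1) -
    (1/2) * ((t : ℝ) + r - k) * ((t : ℝ) + r - k - 1 + (2*(r:ℝ) - 2)/((t:ℝ) - 1))

/-- Λ = λ - 2(s+r) + κ, with s = rt. -/
def LamC (k r t : ℕ) : ℝ := lamExp k (r*(t+1)) - 2*((r*(t+1) : ℕ) : ℝ) + kappa k r t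

/-- The normalised mean value ⟦K_{a,b}(X)⟧ = K_{a,b}(X) (X/M^b)^{-2s} (X/M^a)^{κ-2r}. -/
def normK (k p r t N : ℕ) (X : ℝ) (a b : ℕ) : ℝ :=
  Kmax k p r t X a b * (X / (Mval t N X)^b) ^ (-(2*((r*t : ℕ):ℝ))) *
    (X / (Mval t N X)^a) ^ (kappa k r t - 2*(r:ℝ))

/-- μ = (1/2)(t+r-k)(t+r-k-1). -/
def muC (k r t : ℕ) : ℝ := (1/2) * ((t:ℝ)+r-k) * ((t:ℝ)+r-k-1)

/-- ν = (1/2)(t+r-k)(k+r-t-1). -/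
def nuC (k r t : ℕ) : ℝ := (1/2) * ((t:ℝ)+r-k) * ((k:ℝ)+r-t-1)

/-! By Hölder's inequality, a mean value `K_{a,b}(X; ξ, η)` is at most
`I_a ^ (1 / (t + 1)) * I_b ^ (t / (t + 1))`, where `I_c` is the `2 (t + 1)`-th moment of a sum over
`r`-tuples of integers in `[1, X]` lying in one residue class modulo `p ^ c`. By orthogonality
`I_c` counts solutions of the Vinogradov system, and by translation-dilation invariance it is at
most `J_{s + r, k}(X / p ^ c + 1)`, hence at most `(2 X / M ^ c) ^ (λ + δ)`: the growth hypothesis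
applies because `X / M ^ c ≥ X ^ (1 / 2)`. The powers of `X` and `M` then collapse to the stated
ones, using `0 ≤ Λ + δ` and `κ ≤ r (t + 1)`. -/

/-! ### Characters on the unit box -/

/-- The character `α ↦ e(α · m)` of the torus attached to an integer vector `m`. -/
def echar {k : ℕ} (m : Fin k → ℤ) (α : Fin k → ℝ) : ℂ :=
  ec (∑ j, α j * (m j : ℝ))

lemma ec_sum {ι : Type*} (s : Finset ι) (f : ι → ℝ) :
    ec (∑ i ∈ s, f i) = ∏ i ∈ s, ec (f i) := by
  simp only [ec, Complex.ofReal_sum, Finset.mul_sum, Complex.exp_sum]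

lemma continuous_echar {k : ℕ} (m : Fin k → ℤ) : Continuous (echar m) := by
  unfold echar ec
  fun_prop

lemma echar_mul_conj {k : ℕ} (m n : Fin k → ℤ) (α : Fin k → ℝ) :
    echar m α * (starRingEnd ℂ) (echar n α) = echar (m - n) α := by
  simp only [echar, ec, ← Complex.exp_conj, ← Complex.exp_add]
  congr 1
  simp only [map_mul, Complex.conj_ofReal, Complex.conj_I, map_ofNat, Pi.sub_apply, Int.cast_sub,
    mul_sub, Finset.sum_sub_distrib, Complex.ofReal_sub]
  ring

lemma echar_sum {k : ℕ} {ι : Type*} (s : Finset ι) (m : ι → Fin k → ℤ) (α : Fin k → ℝ) :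
    echar (∑ i ∈ s, m i) α = ∏ i ∈ s, echar (m i) α := by
  simp only [echar, ← ec_sum, Finset.sum_apply, Int.cast_sum, Finset.mul_sum]
  rw [Finset.sum_comm]

lemma integral_ec_mul_int (m : ℤ) :
    ∫ x in Set.Ico (0 : ℝ) 1, ec (x * (m : ℝ)) = if m = 0 then 1 else 0 := by
  rw [integral_Ico_eq_integral_Ioc, ← intervalIntegral.integral_of_le zero_le_one]
  split_ifs with hm
  · simp [hm, ec]
  · have hc : (2 * Real.pi * Complex.I * m : ℂ) ≠ 0 := by
      simp [hm, Real.pi_ne_zero]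
    have hperiod : Complex.exp (2 * Real.pi * Complex.I * m) = 1 :=
      Complex.exp_eq_one_iff.2 ⟨m, by ring⟩
    calc ∫ x in (0 : ℝ)..1, ec (x * (m : ℝ))
        = ∫ x in (0 : ℝ)..1, Complex.exp (2 * Real.pi * Complex.I * m * x) := by
          refine intervalIntegral.integral_congr fun x _ => congrArg Complex.exp ?_
          push_cast
          ring
      _ = 0 := by simp [integral_exp_mul_complex hc, hperiod]

lemma integral_box_echar {k : ℕ} (m : Fin k → ℤ) :
    ∫ α in box k, echar m α = if m = 0 then 1 else 0 := by
  simp only [echar, ec_sum]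
  rw [_root_.box, volume_pi, Measure.restrict_pi_pi,
    integral_fintype_prod_eq_prod (fun j (x : ℝ) => ec (x * (m j : ℝ)))]
  simp only [integral_ec_mul_int, Finset.prod_ite_zero, Finset.mem_univ, forall_const,
    Finset.prod_const_one, funext_iff, Pi.zero_apply]

lemma memLp_box_of_continuous {k : ℕ} {E : Type*} [NormedAddCommGroup E]
    {f : (Fin k → ℝ) → E} (hf : Continuous f) (q : ENNReal) :
    MemLp f q (volume.restrict (box k)) := by
  have hcompact : IsCompact (Set.univ.pi fun _ : Fin k => Set.Icc (0 : ℝ) 1) :=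
    isCompact_univ_pi fun _ => isCompact_Icc
  have hsub : _root_.box k ⊆ Set.univ.pi fun _ : Fin k => Set.Icc (0 : ℝ) 1 :=
    Set.pi_mono fun _ _ => Set.Ico_subset_Icc_self
  have hfin : IsFiniteMeasure (volume.restrict (box k)) :=
    isFiniteMeasure_restrict.2 ((measure_mono hsub).trans_lt hcompact.measure_lt_top).ne
  obtain ⟨C, hC⟩ := hcompact.exists_bound_of_continuousOn hf.continuousOn
  exact MemLp.of_bound hf.aestronglyMeasurable C <|
    ae_restrict_of_forall_mem (MeasurableSet.univ_pi fun _ => measurableSet_Ico)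
      fun x hx => hC x (hsub hx)

lemma integral_norm_pow_mul_norm_pow_le {Ω E F : Type*} [MeasurableSpace Ω] {μ : Measure Ω}
    [NormedAddCommGroup E] [NormedAddCommGroup F] {m n : ℕ} (hm : 0 < m) (hn : 0 < n)
    {f : Ω → E} {g : Ω → F} (hf : MemLp f (m + n) μ) (hg : MemLp g (m + n) μ) :
    ∫ x, ‖f x‖ ^ m * ‖g x‖ ^ n ∂μ ≤
      (∫ x, ‖f x‖ ^ (m + n) ∂μ) ^ ((m : ℝ) / (m + n)) *
        (∫ x, ‖g x‖ ^ (m + n) ∂μ) ^ ((n : ℝ) / (m + n)) := by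
  have hconj : (((m : ℝ) + n) / m).HolderConjugate ((m + n) / n) := by
    simpa only [inv_div] using Real.HolderConjugate.inv_inv
      (a := (m : ℝ) / (m + n)) (b := (n : ℝ) / (m + n)) (by positivity) (by positivity)
      (by field_simp)
  have hrpow {y : ℝ} (hy : 0 ≤ y) {l : ℕ} (hl : 0 < l) :
      (y ^ l) ^ (((m : ℝ) + n) / l) = y ^ (m + n) := by
    rw [← Real.rpow_natCast_mul hy, mul_div_cancel₀ _ (by positivity)]
    exact_mod_cast Real.rpow_natCast y (m + n)
  have hmem {u : Ω → ℝ} (hu : MemLp u (m + n) μ) {l : ℕ} (hl : 0 < l) :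
      MemLp (fun x => ‖u x‖ ^ l) (ENNReal.ofReal (((m : ℝ) + n) / l)) μ := by
    convert hu.norm_rpow_div l using 2
    · simp
    · rw [ENNReal.ofReal_div_of_pos (by positivity)]
      norm_cast
  simpa only [norm_norm, hrpow (norm_nonneg _) hm, hrpow (norm_nonneg _) hn, one_div_div] using
    integral_mul_le_Lp_mul_Lq_of_nonneg hconj
      (.of_forall fun _ => pow_nonneg (norm_nonneg _) _)
      (.of_forall fun _ => pow_nonneg (norm_nonneg _) _) (hmem hf.norm hm) (hmem hg.norm hn)

/-! ### The Vinogradov system -/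

section Vinogradov

variable {k : ℕ} {ι : Type*} [Fintype ι]

/-- The vector of power sums of degrees `1, …, k` of a tuple of integers. -/
def powerSums (k : ℕ) (x : ι → ℤ) : Fin k → ℤ :=
  fun j => ∑ i, x i ^ ((j : ℕ) + 1)

/-- The solutions of the Vinogradov system of degree `k` with both tuples taken from `A`. -/
def vinogradovPairs (k : ℕ) (A : Finset (ι → ℤ)) : Finset ((ι → ℤ) × (ι → ℤ)) :=
  {z ∈ A ×ˢ A | powerSums k z.1 = powerSums k z.2}

/-- The exponential sum `∑ e(α₁ s₁(x) + ⋯ + αₖ sₖ(x))` over the tuples `x ∈ A`, where `sⱼ` is the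
`j`-th power sum; its mean square counts `vinogradovPairs k A`. -/
def vinogradovSum (k : ℕ) (A : Finset (ι → ℤ)) (α : Fin k → ℝ) : ℂ :=
  ∑ x ∈ A, echar (powerSums k x) α

/-- The integers in `[1, X]` congruent to `ξ` modulo `q`. -/
def progression (X : ℝ) (q ξ : ℤ) : Finset ℤ :=
  {x ∈ Finset.Icc 1 ⌊X⌋ | x ≡ ξ [ZMOD q]}

lemma sum_eval_eq_of_powerSums_eq {x y : ι → ℤ} (h : powerSums k x = powerSums k y)
    {P : Polynomial ℤ} (hP : P.natDegree ≤ k) : ∑ i, P.eval (x i) = ∑ i, P.eval (y i) := by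
  simp only [Polynomial.eval_eq_sum_range' (Nat.lt_succ_of_le hP)]
  rw [Finset.sum_comm, Finset.sum_comm (s := univ)]
  refine Finset.sum_congr rfl fun j hj => ?_
  rw [← Finset.mul_sum, ← Finset.mul_sum]
  rcases j with _ | j
  · simp
  · exact congrArg _ (congrFun h ⟨j, Nat.succ_lt_succ_iff.1 (Finset.mem_range.1 hj)⟩)

lemma powerSums_eq_of_affine {x y : ι → ℤ} {q c : ℤ} (hq : q ≠ 0)
    (h : powerSums k (fun i => q * x i + c) = powerSums k (fun i => q * y i + c)) :
    powerSums k x = powerSums k y := by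
  funext j
  have hdeg : ((Polynomial.X - Polynomial.C c) ^ ((j : ℕ) + 1)).natDegree ≤ k := by
    rw [Polynomial.natDegree_pow, Polynomial.natDegree_X_sub_C, mul_one]
    exact j.2
  have hscaled := sum_eval_eq_of_powerSums_eq h hdeg
  simp only [Polynomial.eval_pow, Polynomial.eval_sub, Polynomial.eval_X, Polynomial.eval_C,
    add_sub_cancel_right, mul_pow, ← Finset.mul_sum] at hscaled
  exact mul_left_cancel₀ (pow_ne_zero _ hq) hscaled

lemma powerSums_comp_equiv {κ : Type*} [Fintype κ] (e : ι ≃ κ) (y : κ → ℤ) :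
    powerSums k (fun i => y (e i)) = powerSums k y :=
  funext fun j => e.sum_comp fun l => y l ^ ((j : ℕ) + 1)

lemma vinogradovPairs_mono {A B : Finset (ι → ℤ)} (h : A ⊆ B) :
    vinogradovPairs k A ⊆ vinogradovPairs k B :=
  Finset.filter_subset_filter _ (Finset.product_subset_product h h)

lemma card_vinogradovPairs_le {κ : Type*} [Fintype κ] {A : Finset (ι → ℤ)} {B : Finset (κ → ℤ)}
    (φ : (κ → ℤ) → ι → ℤ) (hA : A ⊆ B.image φ)
    (hφ : ∀ x y, powerSums k (φ x) = powerSums k (φ y) → powerSums k x = powerSums k y) :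
    #(vinogradovPairs k A) ≤ #(vinogradovPairs k B) := by
  refine (Finset.card_le_card fun z hz => ?_).trans
    (Finset.card_image_le (f := Prod.map φ φ) (s := vinogradovPairs k B))
  obtain ⟨hz, hpow⟩ := Finset.mem_filter.1 hz
  obtain ⟨h₁, h₂⟩ := Finset.mem_product.1 hz
  obtain ⟨x, hx, hxz⟩ := Finset.mem_image.1 (hA h₁)
  obtain ⟨y, hy, hyz⟩ := Finset.mem_image.1 (hA h₂)
  rw [← hxz, ← hyz] at hpow
  exact Finset.mem_image.2 ⟨(x, y),
    Finset.mem_filter.2 ⟨Finset.mk_mem_product hx hy, hφ x y hpow⟩, Prod.ext hxz hyz⟩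

lemma Jcount_eq_card_vinogradovPairs (s k : ℕ) (X : ℝ) :
    Jcount s k X =
      #(vinogradovPairs k (Fintype.piFinset fun _ : Fin s => Finset.Icc (1 : ℤ) ⌊X⌋)) := by
  rw [Jcount, ← Set.ncard_coe_finset]
  congr 1
  ext z
  have hpow : (∀ j ∈ Finset.Icc 1 k, ∑ i, (z.1 i ^ j - z.2 i ^ j) = 0) ↔
      powerSums k z.1 = powerSums k z.2 := by
    simp only [Finset.sum_sub_distrib, sub_eq_zero, funext_iff, powerSums, Finset.mem_Icc]
    exact ⟨fun h j => h _ ⟨j.1.succ_pos, j.2⟩, fun h j hj => by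
      simpa [Nat.sub_add_cancel hj.1] using h ⟨j - 1, by omega⟩⟩
  simp only [Set.mem_ofPred_eq, hpow]
  simp only [vinogradovPairs, Finset.mem_coe, Finset.mem_filter, Finset.mem_product,
    Fintype.mem_piFinset, Finset.mem_Icc, Int.le_floor, and_assoc]

lemma Jcount_mono (s k : ℕ) : Monotone (Jcount s k) := fun X Y hXY => by
  simp only [Jcount_eq_card_vinogradovPairs]
  exact Finset.card_le_card <| vinogradovPairs_mono <| Fintype.piFinset_subset _ _ fun _ =>
    Finset.Icc_subset_Icc_right (Int.floor_mono hXY)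

-- The shift is `ξ % q - q`, not `ξ % q`, so that the new variable starts at `1` as in `Jcount`.
lemma exists_mem_Icc_affine_eq {X : ℝ} {q ξ x : ℤ} (hq : 0 < q) (hx : x ∈ progression X q ξ) :
    ∃ y ∈ Finset.Icc 1 ⌊X / q + 1⌋, q * y + (ξ % q - q) = x := by
  simp only [progression, Finset.mem_filter, Finset.mem_Icc, Int.le_floor] at hx
  obtain ⟨⟨hx1, hxX⟩, hmod⟩ := hx
  have hdiv : q * (x / q) + ξ % q = x := hmod ▸ Int.mul_ediv_add_emod x q
  have hq' : (0 : ℝ) < q := Int.cast_pos.2 hq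
  refine ⟨x / q + 1, Finset.mem_Icc.2 ⟨?_, Int.le_floor.2 ?_⟩, by linarith⟩
  · linarith [Int.ediv_nonneg (zero_le_one.trans hx1) hq.le]
  · have hle : (q : ℝ) * (x / q : ℤ) ≤ x := mod_cast Int.mul_ediv_self_le hq.ne'
    push_cast
    gcongr
    exact (le_div_iff₀' hq').2 (hle.trans hxX)

lemma card_vinogradovPairs_le_Jcount {X : ℝ} {q ξ : ℤ} (hq : 0 < q) {A : Finset (ι → ℤ)}
    (hA : ∀ x ∈ A, ∀ i, x i ∈ progression X q ξ) :
    #(vinogradovPairs k A) ≤ Jcount (Fintype.card ι) k (X / q + 1) := by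
  rw [Jcount_eq_card_vinogradovPairs]
  let e := Fintype.equivFin ι
  refine card_vinogradovPairs_le (fun y i => q * y (e i) + (ξ % q - q)) (fun x hx => ?_)
    fun x y h => ?_
  · choose y hy hxy using fun i => exists_mem_Icc_affine_eq hq (hA x hx i)
    exact Finset.mem_image.2 ⟨y ∘ e.symm, Fintype.mem_piFinset.2 fun l => hy _, by simp [hxy]⟩
  · simpa only [powerSums_comp_equiv] using powerSums_eq_of_affine hq.ne' h

lemma continuous_vinogradovSum (A : Finset (ι → ℤ)) : Continuous (vinogradovSum k A) :=
  continuous_finsetSum _ fun _ _ => continuous_echar _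

lemma integral_box_norm_vinogradovSum_sq (A : Finset (ι → ℤ)) :
    ∫ α in box k, ‖vinogradovSum k A α‖ ^ 2 = #(vinogradovPairs k A) := by
  have hexpand (α : Fin k → ℝ) : ((‖vinogradovSum k A α‖ ^ 2 : ℝ) : ℂ) =
      ∑ z ∈ A ×ˢ A, echar (powerSums k z.1 - powerSums k z.2) α := by
    rw [Complex.ofReal_pow, ← Complex.mul_conj', vinogradovSum, map_sum, Finset.sum_mul_sum,
      ← Finset.sum_product']
    exact Finset.sum_congr rfl fun z _ => echar_mul_conj _ _ _
  rw [← Complex.ofReal_inj, ← integral_complex_ofReal]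
  simp only [hexpand]
  rw [integral_finsetSum _ fun z _ =>
    memLp_one_iff_integrable.1 (memLp_box_of_continuous (continuous_echar _) 1)]
  simp [integral_box_echar, sub_eq_zero, vinogradovPairs]

lemma vinogradovSum_pow_card {κ : Type*} [Fintype κ] [DecidableEq κ] (A : Finset (ι → ℤ))
    (α : Fin k → ℝ) :
    vinogradovSum k A α ^ Fintype.card κ =
      vinogradovSum k ((Fintype.piFinset fun _ : κ => A).map
        (Equiv.curry κ ι ℤ).symm.toEmbedding) α := by
  have hcurry (y : κ → ι → ℤ) :
      powerSums k ((Equiv.curry κ ι ℤ).symm y) = ∑ l, powerSums k (y l) := by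
    funext j
    simp [powerSums, Fintype.sum_prod_type]
  simp only [vinogradovSum, Finset.sum_map, Equiv.coe_toEmbedding, hcurry, echar_sum]
  rw [← Finset.card_univ, ← Finset.prod_const, Finset.prod_univ_sum]

lemma integral_box_norm_vinogradovSum_pow_le_Jcount {X : ℝ} {q ξ : ℤ} (hq : 0 < q)
    {A : Finset (ι → ℤ)} (hA : ∀ x ∈ A, ∀ i, x i ∈ progression X q ξ) (n : ℕ) :
    ∫ α in box k, ‖vinogradovSum k A α‖ ^ (2 * n) ≤
      Jcount (n * Fintype.card ι) k (X / q + 1) := by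
  have hsquare (α : Fin k → ℝ) : ‖vinogradovSum k A α‖ ^ (2 * n) =
      ‖vinogradovSum k ((Fintype.piFinset fun _ : Fin n => A).map
        (Equiv.curry (Fin n) ι ℤ).symm.toEmbedding) α‖ ^ 2 := by
    rw [← vinogradovSum_pow_card A, Fintype.card_fin, norm_pow, ← pow_mul, mul_comm]
  simp only [hsquare, integral_box_norm_vinogradovSum_sq, Nat.cast_le]
  refine (card_vinogradovPairs_le_Jcount (X := X) (ξ := ξ) hq fun x hx i => ?_).trans_eq (by simp)
  obtain ⟨y, hy, rfl⟩ := Finset.mem_map.1 hx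
  exact hA _ (Fintype.mem_piFinset.1 hy i.1) i.2

lemma integral_box_norm_vinogradovSum_mul_le {t : ℕ} (ht : 0 < t) {X : ℝ} {q₁ q₂ ξ η : ℤ}
    (hq₁ : 0 < q₁) (hq₂ : 0 < q₂) {A B : Finset (ι → ℤ)}
    (hA : ∀ x ∈ A, ∀ i, x i ∈ progression X q₁ ξ) (hB : ∀ x ∈ B, ∀ i, x i ∈ progression X q₂ η) :
    ∫ α in box k, ‖vinogradovSum k A α‖ ^ 2 * ‖vinogradovSum k B α‖ ^ (2 * t) ≤
      (Jcount (Fintype.card ι * (t + 1)) k (X / q₁ + 1) : ℝ) ^ (1 / ((t : ℝ) + 1)) *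
        (Jcount (Fintype.card ι * (t + 1)) k (X / q₂ + 1) : ℝ) ^ ((t : ℝ) / (t + 1)) := by
  have hexp₁ : ((2 : ℕ) : ℝ) / ((2 : ℕ) + (2 * t : ℕ)) = 1 / (t + 1) := by
    push_cast
    field_simp
    ring
  have hexp₂ : ((2 * t : ℕ) : ℝ) / ((2 : ℕ) + (2 * t : ℕ)) = t / (t + 1) := by
    push_cast
    field_simp
    ring
  have hholder := integral_norm_pow_mul_norm_pow_le (m := 2) (n := 2 * t) two_pos (by omega)
    (memLp_box_of_continuous (continuous_vinogradovSum (k := k) A) _)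
    (memLp_box_of_continuous (continuous_vinogradovSum (k := k) B) _)
  rw [hexp₁, hexp₂, show 2 + 2 * t = 2 * (t + 1) by ring] at hholder
  rw [mul_comm (Fintype.card ι)]
  refine hholder.trans ?_
  gcongr
  · exact integral_box_norm_vinogradovSum_pow_le_Jcount hq₁ hA _
  · exact integral_box_norm_vinogradovSum_pow_le_Jcount hq₂ hB _

/-! ### Conditioned exponential sums -/

/-- The tuples with entries in `[1, X]` congruent entrywise, modulo `q`, to a member of `V`. -/
def residueTuples (X : ℝ) (q : ℤ) (V : Set (ι → ℤ)) : Finset (ι → ℤ) :=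
  {x ∈ Fintype.piFinset fun _ => Finset.Icc 1 ⌊X⌋ | ∃ v ∈ V, ∀ i, x i ≡ v i [ZMOD q]}

lemma mem_progression_of_mem_residueTuples {X : ℝ} {q d ξ : ℤ} {V : Set (ι → ℤ)} (hd : d ∣ q)
    (hV : ∀ v ∈ V, ∀ i, v i ≡ ξ [ZMOD d]) {x : ι → ℤ} (hx : x ∈ residueTuples X q V) (i : ι) :
    x i ∈ progression X d ξ := by
  obtain ⟨hx, v, hv, hxv⟩ := Finset.mem_filter.1 hx
  exact Finset.mem_filter.2
    ⟨Fintype.mem_piFinset.1 hx i, ((hxv i).of_dvd hd).trans (hV v hv i)⟩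

lemma prod_fexp (k p : ℕ) (X : ℝ) (c : ℕ) (v : ι → ℤ) (α : Fin k → ℝ) :
    ∏ i, fexp k p X c (v i) α =
      vinogradovSum k (Fintype.piFinset fun i => progression X ((p : ℤ) ^ c) (v i)) α := by
  have hfexp (ξ : ℤ) : fexp k p X c ξ α =
      ∑ x ∈ progression X ((p : ℤ) ^ c) ξ, echar (fun j : Fin k => x ^ ((j : ℕ) + 1)) α := by
    simp [fexp, progression, echar]
  have hpow (x : ι → ℤ) :
      powerSums k x = ∑ i, fun j : Fin k => x i ^ ((j : ℕ) + 1) := by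
    funext j
    simp [powerSums]
  simp only [hfexp, Finset.prod_univ_sum, vinogradovSum, hpow, echar_sum]

lemma pairwiseDisjoint_piFinset_progression (X : ℝ) (q : ℤ) :
    {v : ι → ℤ | ∀ i, v i ∈ Set.Icc 1 q}.PairwiseDisjoint
      fun v => Fintype.piFinset fun i => progression X q (v i) := by
  intro v hv w hw hvw
  refine Finset.disjoint_left.2 fun x hxv hxw => hvw (funext fun i => ?_)
  have hmodv := (Finset.mem_filter.1 (Fintype.mem_piFinset.1 hxv i)).2
  have hmodw := (Finset.mem_filter.1 (Fintype.mem_piFinset.1 hxw i)).2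
  have hzero := Int.eq_zero_of_abs_lt_dvd (hmodv.symm.trans hmodw).dvd
    (abs_lt.2 ⟨by linarith [(hv i).2, (hw i).1], by linarith [(hv i).1, (hw i).2]⟩)
  exact (sub_eq_zero.1 hzero).symm

lemma finsum_prod_fexp {p c : ℕ} {V : Set (ι → ℤ)}
    (hV : V ⊆ {v | ∀ i, v i ∈ Set.Icc 1 ((p : ℤ) ^ c)}) (X : ℝ) (α : Fin k → ℝ) :
    ∑ᶠ v ∈ V, ∏ i, fexp k p X c (v i) α =
      vinogradovSum k (residueTuples X ((p : ℤ) ^ c) V) α := by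
  have hfin : V.Finite :=
    (Set.Finite.pi' fun _ => Set.finite_Icc 1 ((p : ℤ) ^ c)).subset hV
  have hunion : residueTuples X ((p : ℤ) ^ c) V = hfin.toFinset.biUnion fun v =>
      Fintype.piFinset fun i => progression X ((p : ℤ) ^ c) (v i) := by
    ext x
    simp only [residueTuples, progression, Finset.mem_filter, Finset.mem_biUnion,
      Fintype.mem_piFinset, Set.Finite.mem_toFinset, forall_and]
    tauto
  have hdisj := (pairwiseDisjoint_piFinset_progression X ((p : ℤ) ^ c)).subset hV
  rw [finsum_mem_eq_finite_toFinset_sum _ hfin, hunion, vinogradovSum,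
    Finset.sum_biUnion (by simpa using hdisj)]
  exact Finset.sum_congr rfl fun v _ => prod_fexp k p X c v α

end Vinogradov

lemma integral_box_norm_finsum_prod_fexp_mul_le {k p r t : ℕ} (hp : 0 < p) (ht : 0 < t)
    (X : ℝ) {a b : ℕ} {V W : Set (Fin r → ℤ)} {ξ η : ℤ} (hV : V ⊆ XiSet p r a ξ)
    (hW : W ⊆ XiSet p r b η) :
    ∫ α in box k, ‖∑ᶠ v ∈ V, ∏ i, fexp k p X (a + 1) (v i) α‖ ^ 2 *
        ‖∑ᶠ v ∈ W, ∏ i, fexp k p X (b + 1) (v i) α‖ ^ (2 * t) ≤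
      (Jcount (r * (t + 1)) k (X / (p : ℝ) ^ a + 1) : ℝ) ^ (1 / ((t : ℝ) + 1)) *
        (Jcount (r * (t + 1)) k (X / (p : ℝ) ^ b + 1) : ℝ) ^ ((t : ℝ) / (t + 1)) := by
  have hclass {c : ℕ} {U : Set (Fin r → ℤ)} {ζ : ℤ} (hU : U ⊆ XiSet p r c ζ) :
      ∀ x ∈ residueTuples X ((p : ℤ) ^ (c + 1)) U, ∀ i, x i ∈ progression X ((p : ℤ) ^ c) ζ :=
    fun _ => mem_progression_of_mem_residueTuples (pow_dvd_pow _ c.le_succ)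
      fun v hv => (hU hv).2.1
  simp only [finsum_prod_fexp fun _ hv => (hV hv).1, finsum_prod_fexp fun _ hv => (hW hv).1]
  have hmixed := integral_box_norm_vinogradovSum_mul_le (k := k) ht
    (pow_pos (Int.natCast_pos.2 hp) a) (pow_pos (Int.natCast_pos.2 hp) b) (hclass hV) (hclass hW)
  simpa only [Fintype.card_fin, Int.cast_pow, Int.cast_natCast] using hmixed

lemma Kmax_le_Jcount_rpow_mul_Jcount_rpow {p t : ℕ} (hp : 0 < p) (ht : 0 < t) (k r : ℕ) (X : ℝ)
    (a b : ℕ) :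
    Kmax k p r t X a b ≤
      (Jcount (r * (t + 1)) k (X / (p : ℝ) ^ a + 1) : ℝ) ^ (1 / ((t : ℝ) + 1)) *
        (Jcount (r * (t + 1)) k (X / (p : ℝ) ^ b + 1) : ℝ) ^ ((t : ℝ) / (t + 1)) := by
  rw [Kmax]
  split_ifs with ha
  · refine Real.sSup_le ?_ (by positivity)
    rintro _ ⟨η, -, -, rfl⟩
    rw [ha]
    exact integral_box_norm_finsum_prod_fexp_mul_le hp ht X (fun v hv => hv.1) subset_rfl
  · refine Real.sSup_le ?_ (by positivity)
    rintro _ ⟨ξ, η, -, -, -, -, -, rfl⟩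
    exact integral_box_norm_finsum_prod_fexp_mul_le hp ht X subset_rfl subset_rfl

/-! ### Exponents -/

lemma kappa_le {k r t : ℕ} (ht : 2 ≤ t) (hr : 1 ≤ r) (hrt : k ≤ r + t) :
    kappa k r t ≤ (r : ℝ) * ((t : ℝ) + 1) := by
  have ht' : (2 : ℝ) ≤ t := by exact_mod_cast ht
  have hr' : (1 : ℝ) ≤ r := by exact_mod_cast hr
  have hfrac : 0 ≤ (2 * (r : ℝ) - 2) / ((t : ℝ) - 1) :=
    div_nonneg (by linarith) (by linarith)
  obtain ⟨d, hd⟩ := Nat.exists_eq_add_of_le hrt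
  have hexcess : (t : ℝ) + r - k = d := by
    rw [sub_eq_iff_eq_add', add_comm]
    exact_mod_cast hd
  have hmul : 0 ≤ (d : ℝ) * (d - 1 + (2 * (r : ℝ) - 2) / ((t : ℝ) - 1)) := by
    rcases d.eq_zero_or_pos with rfl | hpos
    · simp
    · have hd1 : (1 : ℝ) ≤ d := by exact_mod_cast hpos
      exact mul_nonneg d.cast_nonneg (by linarith)
  rw [kappa, hexcess]
  linarith

lemma normalized_rpow_mul_rpow_eq {A D r t κ ν : ℝ} (hA : 0 < A) (hD : 0 < D) (ht : 0 < t) :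
    ((2 * A) ^ ν) ^ (1 / (t + 1)) * ((2 * (A / D)) ^ ν) ^ (t / (t + 1)) *
        (A / D) ^ (-(2 * (r * t))) * A ^ (κ - 2 * r) =
      2 ^ ν * A ^ (ν - 2 * (r * (t + 1)) + κ) *
        D ^ (t / (t + 1) * (κ - (ν - 2 * (r * (t + 1)) + κ))) := by
  obtain ⟨u, rfl⟩ : ∃ u, Real.exp u = A := ⟨_, Real.exp_log hA⟩
  obtain ⟨v, rfl⟩ : ∃ v, Real.exp v = D := ⟨_, Real.exp_log hD⟩
  rw [← Real.exp_log two_pos]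
  simp only [← Real.exp_sub, ← Real.exp_add, ← Real.exp_mul]
  congr 1
  field_simp
  ring

lemma normalized_rpow_mul_rpow_le {A D X r t κ ν : ℝ} (hA : 0 < A) (hD : 1 ≤ D) (hAX : A ≤ X)
    (ht : 0 < t) (hκ : κ ≤ r * (t + 1)) (hΛ : 0 ≤ ν - 2 * (r * (t + 1)) + κ) :
    ((2 * A) ^ ν) ^ (1 / (t + 1)) * ((2 * (A / D)) ^ ν) ^ (t / (t + 1)) *
        (A / D) ^ (-(2 * (r * t))) * A ^ (κ - 2 * r) ≤
      2 ^ ν * X ^ (ν - 2 * (r * (t + 1)) + κ) * D ^ (r * t) := by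
  have hexp : t / (t + 1) * (κ - (ν - 2 * (r * (t + 1)) + κ)) ≤ r * t :=
    calc t / (t + 1) * (κ - (ν - 2 * (r * (t + 1)) + κ)) ≤ t / (t + 1) * (r * (t + 1)) := by
          gcongr
          linarith
      _ = r * t := by field_simp
  have hX : 0 < X := hA.trans_le hAX
  rw [normalized_rpow_mul_rpow_eq hA (by positivity) ht]
  gcongr

section Parameters

variable {t N : ℕ} {X : ℝ}

lemma thetaC_pos (ht : 0 < t) : 0 < thetaC t N := by
  unfold thetaC
  positivity

lemma deltaC_nonneg (t N : ℕ) : 0 ≤ deltaC t N := by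
  unfold deltaC thetaC
  positivity

lemma one_le_Mval (ht : 0 < t) (hX : 1 ≤ X) : 1 ≤ Mval t N X :=
  Real.one_le_rpow hX (thetaC_pos ht).le

lemma Mval_pow_le_rpow_half (ht : 0 < t) (hX : 1 ≤ X) {b : ℕ} (hb : (b : ℝ) ≤ (2 * thetaC t N)⁻¹) :
    Mval t N X ^ b ≤ X ^ ((1 : ℝ) / 2) := by
  have hθ : 0 < thetaC t N := thetaC_pos ht
  rw [Mval, ← Real.rpow_mul_natCast (zero_le_one.trans hX)]
  refine Real.rpow_le_rpow_of_exponent_le hX ?_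
  calc thetaC t N * b ≤ thetaC t N * (2 * thetaC t N)⁻¹ := by gcongr
    _ = 1 / 2 := by field_simp

end Parameters

lemma Jcount_div_pow_add_one_le {s k c : ℕ} {X M P ν : ℝ} (hX : 1 ≤ X) (hM : 0 < M) (hMP : M ≤ P)
    (hMc : M ^ c ≤ X ^ ((1 : ℝ) / 2))
    (hJ : ∀ Y : ℝ, X ^ ((1 : ℝ) / 2) ≤ Y → (Jcount s k Y : ℝ) ≤ Y ^ ν) :
    (Jcount s k (X / P ^ c + 1) : ℝ) ≤ (2 * (X / M ^ c)) ^ ν := by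
  have hhalf : X ^ ((1 : ℝ) / 2) ≤ X / M ^ c := by
    rw [le_div_iff₀ (by positivity)]
    calc X ^ ((1 : ℝ) / 2) * M ^ c ≤ X ^ ((1 : ℝ) / 2) * X ^ ((1 : ℝ) / 2) := by gcongr
      _ = X := by rw [← Real.rpow_add (by positivity), add_halves, Real.rpow_one]
  have hone : 1 ≤ X / M ^ c := (Real.one_le_rpow hX (by norm_num)).trans hhalf
  have hside : X / P ^ c + 1 ≤ 2 * (X / M ^ c) := by
    have : X / P ^ c ≤ X / M ^ c := by gcongr
    linarith
  calc (Jcount s k (X / P ^ c + 1) : ℝ) ≤ Jcount s k (2 * (X / M ^ c)) := by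
        exact_mod_cast Jcount_mono s k hside
    _ ≤ (2 * (X / M ^ c)) ^ ν := hJ _ (by linarith)

theorem lemma5_3_general {k r t N p a b : ℕ} {X δ : ℝ} (ht : 2 ≤ t) (hr : 1 ≤ r) (hrt : k ≤ r + t)
    (hX : 1 ≤ X) (hΛ : 0 ≤ LamC k r t + δ)
    (hJ : ∀ Y : ℝ, X ^ ((1 : ℝ) / 2) ≤ Y →
      (Jcount (r * (t + 1)) k Y : ℝ) ≤ Y ^ (lamExp k (r * (t + 1)) + δ))
    (hMp : Mval t N X ≤ p) (hab : a ≤ b) (hb : (b : ℝ) ≤ (2 * thetaC t N)⁻¹) :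
    normK k p r t N X a b ≤
      2 ^ (lamExp k (r * (t + 1)) + δ) * X ^ (LamC k r t + δ) *
        (Mval t N X ^ (b - a)) ^ (r * t) := by
  have ht0 : 0 < t := by omega
  have hM : 1 ≤ Mval t N X := one_le_Mval ht0 hX
  have hp : 0 < p := by exact_mod_cast (zero_lt_one.trans_le hM).trans_le hMp
  have hcount (c : ℕ) (hc : c ≤ b) := Jcount_div_pow_add_one_le hX (zero_lt_one.trans_le hM) hMp
    ((pow_le_pow_right₀ hM hc).trans (Mval_pow_le_rpow_half ht0 hX hb)) hJ
  have hexp : LamC k r t + δ =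
      lamExp k (r * (t + 1)) + δ - 2 * ((r : ℝ) * (t + 1)) + kappa k r t := by
    rw [LamC]
    push_cast
    ring
  have hquot : X / Mval t N X ^ b = X / Mval t N X ^ a / Mval t N X ^ (b - a) := by
    rw [div_div, ← pow_add, Nat.add_sub_cancel' hab]
  calc normK k p r t N X a b
      ≤ ((2 * (X / Mval t N X ^ a)) ^ (lamExp k (r * (t + 1)) + δ)) ^ (1 / ((t : ℝ) + 1)) *
          ((2 * (X / Mval t N X ^ b)) ^ (lamExp k (r * (t + 1)) + δ)) ^ ((t : ℝ) / (t + 1)) *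
          (X / Mval t N X ^ b) ^ (-(2 * ((r : ℝ) * t))) *
          (X / Mval t N X ^ a) ^ (kappa k r t - 2 * (r : ℝ)) := by
        rw [normK, Nat.cast_mul]
        gcongr
        refine (Kmax_le_Jcount_rpow_mul_Jcount_rpow hp ht0 k r X a b).trans ?_
        gcongr
        exacts [hcount a hab, hcount b le_rfl]
    _ ≤ _ := by
        rw [hquot, hexp, ← Real.rpow_natCast _ (r * t), Nat.cast_mul]
        exact normalized_rpow_mul_rpow_le (by positivity) (one_le_pow₀ hM)
          (div_le_self (by positivity) (one_le_pow₀ hM)) (by positivity) (kappa_le ht hr hrt)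
          (hexp ▸ hΛ)

/-- Lemma 5.3: for 0 ≤ a < b ≤ (2θ)⁻¹ and Λ ≥ 0 one has
⟦K_{a,b}(X)⟧ ≤ C X^{Λ+δ} (M^{b-a})^s. -/
theorem lemma5_3 (k r t : ℕ) (hk : 2 ≤ k)
    (ht1 : max 2 (((k : ℝ) - 1) / 2) ≤ (t : ℝ)) (ht2 : t ≤ k)
    (hr1 : 1 ≤ r) (hr2 : r ≤ k) (hrt : k ≤ r + t) :
    ∃ N₀ : ℕ, ∀ N : ℕ, N₀ ≤ N →
    ∃ C : ℝ, 0 < C ∧ ∃ X₀ : ℝ, ∀ X : ℝ, X₀ ≤ X →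
    (∀ Y : ℝ, X ^ ((1:ℝ)/2) ≤ Y →
        (Jcount (r*(t+1)) k Y : ℝ) < Y ^ (lamExp k (r*(t+1)) + deltaC t N)) →
    ∀ p : ℕ, p.Prime → Mval t N X < (p:ℝ) → (p:ℝ) ≤ 2 * Mval t N X →
    0 ≤ LamC k r t →
    ∀ a b : ℕ, a < b → (b:ℝ) ≤ (2 * thetaC t N)⁻¹ →
      normK k p r t N X a b ≤
        C * X ^ (LamC k r t + deltaC t N) * (Mval t N X ^ (b-a)) ^ (r*t) := by
  have ht : 2 ≤ t := by exact_mod_cast (le_max_left _ _).trans ht1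
  refine ⟨0, fun N _ => ⟨2 ^ (lamExp k (r * (t + 1)) + deltaC t N), by positivity, 1,
    fun X hX hJ p _ hMp _ hΛ a b hab hb => ?_⟩⟩
  exact lemma5_3_general ht hr1 hrt hX (add_nonneg hΛ (deltaC_nonneg t N))
    (fun Y hY => (hJ Y hY).le) hMp.le hab.le hb

end
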